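/- arXiv:1801.05388 — 2 statements merged into one kernel-verified Lean document; each statement's English description precedes it below -/
import Mathlib

section
/- (Necessity part of the feasibility characterization) If a contract is feasible, then the following three conditions hold: (i) w_1 ≤ w_2 ≤ ⋯ ≤ w_T; (ii) 0 ≤ p_1 ≤ U(λ_1, w_1); (iii) for every k = 2, …, T, p_{k−1} + U(λ_{k−1}, w_k) − U(λ_{k−1}, w_{k−1}) ≤ p_k ≤ p_{k−1} + U(λ_k, w_k) − U(λ_k, w_{k−1}). -/
/-!
Conditions (ii) and (iii) are rearrangements of nonnegativity of prices, IR for type 1, and the two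
IC constraints between adjacent types. Monotonicity of the qualities (i) is a single-crossing
argument. The Poisson tail satisfies
`d/dλ T(λ, k + 1) = e^{-λ} λ^k / k!`, so each `T(·, k)` with `k ≥ 1` is strictly increasing on
`[0, ∞)` (`poissonTail_strictMonoOn`), and hence so is the utility gain `U(·, b) - U(·, a)` for
`a < b` (`utility_increment_lt`). If `λ_i < λ_j` but `w_j < w_i`, adding the two IC constraints
between `i` and `j` says that the gain from `w_j` to `w_i` is at least as large for `λ_i` as for
`λ_j`, a contradiction.
-/

/-- Tail probability of a Poisson random variable with mean `lam` at threshold `k`. -/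
noncomputable def poissonTail (lam : ℝ) (k : ℕ) : ℝ :=
  1 - Real.exp (-lam) * ∑ i ∈ Finset.range k, lam ^ i / (Nat.factorial i : ℝ)

/-- Utility of a `lam`-type UAV obtaining `w` channels: `U(lam, w) = ∑_{k=1}^{w} P(X_lam ≥ k)`. -/
noncomputable def utility (lam : ℝ) (w : ℕ) : ℝ :=
  ∑ k ∈ Finset.Icc 1 w, poissonTail lam k

/-- A contract `(w, p)` for `T` types `lam 1 < ⋯ < lam T` is feasible if prices are
nonnegative, and the IC and IR constraints hold. -/
def Feasible (T : ℕ) (lam : ℕ → ℝ) (w : ℕ → ℕ) (p : ℕ → ℝ) : Prop :=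
  (∀ t, 1 ≤ t → t ≤ T → 0 ≤ p t) ∧
  (∀ t s, 1 ≤ t → t ≤ T → 1 ≤ s → s ≤ T → s ≠ t →
    utility (lam t) (w t) - p t ≥ utility (lam t) (w s) - p s) ∧
  (∀ t, 1 ≤ t → t ≤ T → utility (lam t) (w t) - p t ≥ 0)

/-- Differentiating the Poisson distribution function in its mean telescopes: only the top term of
the sum survives. -/
lemma hasDerivAt_poissonTail_succ (x : ℝ) (k : ℕ) :
    HasDerivAt (fun l => poissonTail l (k + 1))
      (Real.exp (-x) * (x ^ k / (Nat.factorial k : ℝ))) x := by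
  have hexp : HasDerivAt (fun l : ℝ => Real.exp (-l)) (-Real.exp (-x)) x := by
    simpa using (hasDerivAt_neg x).exp
  induction k with
  | zero =>
    simpa [poissonTail] using hexp.const_sub 1
  | succ k ih =>
    have hrec : (fun l => poissonTail l (k + 1 + 1)) = fun l => poissonTail l (k + 1) -
        Real.exp (-l) * (l ^ (k + 1) / (Nat.factorial (k + 1) : ℝ)) := by
      funext l
      simp only [poissonTail, Finset.sum_range_succ _ (k + 1)]
      ring
    rw [hrec]
    have hpow := (hasDerivAt_pow (k + 1) x).div_const (Nat.factorial (k + 1) : ℝ)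
    refine (ih.sub (hexp.mul hpow)).congr_deriv ?_
    have hk : (Nat.factorial k : ℝ) ≠ 0 := by positivity
    have hk1 : (k : ℝ) + 1 ≠ 0 := by positivity
    simp only [Nat.factorial_succ, Nat.cast_mul, Nat.cast_add, Nat.cast_one, Nat.add_sub_cancel]
    field_simp
    ring

lemma poissonTail_strictMonoOn (k : ℕ) :
    StrictMonoOn (fun l => poissonTail l (k + 1)) (Set.Ici 0) := by
  refine strictMonoOn_of_deriv_pos (convex_Ici 0)
    (fun x _ => (hasDerivAt_poissonTail_succ x k).continuousAt.continuousWithinAt) ?_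
  intro x hx
  rw [interior_Ici] at hx
  have hx : 0 < x := hx
  rw [(hasDerivAt_poissonTail_succ x k).deriv]
  positivity

lemma utility_succ (l : ℝ) (n : ℕ) :
    utility l (n + 1) = utility l n + poissonTail l (n + 1) :=
  Finset.sum_Icc_succ_top (Nat.le_add_left 1 n) _

/-- Strictly increasing differences (the single-crossing property): a higher type gains strictly
more from a higher quality. -/
lemma utility_increment_lt {l m : ℝ} (hl : 0 ≤ l) (hlm : l < m) {a b : ℕ} (hab : a < b) :
    utility l b - utility l a < utility m b - utility m a := by
  have hT (n : ℕ) : poissonTail l (n + 1) < poissonTail m (n + 1) :=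
    poissonTail_strictMonoOn n hl (hl.trans hlm.le) hlm
  induction b, hab using Nat.le_induction with
  | base =>
    rw [Nat.succ_eq_add_one, utility_succ, utility_succ]
    linarith [hT a]
  | succ b _ ih =>
    rw [utility_succ, utility_succ]
    linarith [hT b]

theorem feasible_necessary_conditions (T : ℕ) (hT : 1 ≤ T) (lam : ℕ → ℝ) (w : ℕ → ℕ)
    (p : ℕ → ℝ) (hpos : ∀ t, 1 ≤ t → t ≤ T → 0 < lam t)
    (hmono : ∀ i j, 1 ≤ i → i < j → j ≤ T → lam i < lam j)
    (hfeas : Feasible T lam w p) :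
    (∀ i j, 1 ≤ i → i ≤ j → j ≤ T → w i ≤ w j) ∧
    (0 ≤ p 1 ∧ p 1 ≤ utility (lam 1) (w 1)) ∧
    (∀ k, 2 ≤ k → k ≤ T →
      p (k - 1) + utility (lam (k - 1)) (w k) - utility (lam (k - 1)) (w (k - 1)) ≤ p k ∧
      p k ≤ p (k - 1) + utility (lam k) (w k) - utility (lam k) (w (k - 1))) := by
  obtain ⟨hp, hIC, hIR⟩ := hfeas
  refine ⟨fun i j hi hij hj => ?_, ⟨hp 1 le_rfl hT, ?_⟩, fun k hk hkT => ⟨?_, ?_⟩⟩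
  · rcases hij.eq_or_lt with rfl | hlt
    · exact le_rfl
    by_contra! hw
    have h1 := hIC i j hi (by omega) (by omega) hj (by omega)
    have h2 := hIC j i (by omega) hj hi (by omega) (by omega)
    have h3 := utility_increment_lt (hpos i hi (by omega)).le (hmono i j hi hlt hj) hw
    linarith
  · linarith [hIR 1 le_rfl hT]
  · linarith [hIC (k - 1) k (by omega) (by omega) (by omega) hkT (by omega)]
  · linarith [hIC k (k - 1) (by omega) hkT (by omega) (by omega) (by omega)]
end

section
/- (Monotonicity of optimal prices in types) Let 0 < λ_1 < λ_2 < ⋯ < λ_T and 0 < λ'_1 < λ'_2 < ⋯ < λ'_T be two sets of types with λ_t ≤ λ'_t for every t, and fix a common feasible quality assignment w_1 ≤ w_2 ≤ ⋯ ≤ w_T. Let p̂ and p̂' be the optimal pricings determined by (λ, w) and (λ', w) respectively. Then p̂_t ≤ p̂'_t for every t ∈ {1,…,T}. -/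
theorem hasDerivAt_poissonTail (k : ℕ) (x : ℝ) :
    HasDerivAt (fun y => poissonTail y (k + 1))
      (Real.exp (-x) * (x ^ k / (Nat.factorial k : ℝ))) x := by
  have hexp : HasDerivAt (fun y : ℝ => Real.exp (-y)) (-Real.exp (-x)) x := by
    simpa using (hasDerivAt_neg x).exp
  induction k with
  | zero => simpa [poissonTail] using hexp.const_sub 1
  | succ k ih =>
    have hsucc : (fun y => poissonTail y (k + 1 + 1)) = fun y => poissonTail y (k + 1) -
        Real.exp (-y) * (y ^ (k + 1) / (Nat.factorial (k + 1) : ℝ)) := by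
      funext y
      unfold poissonTail
      rw [Finset.sum_range_succ _ (k + 1)]
      ring
    rw [hsucc]
    refine (ih.sub (hexp.mul ((hasDerivAt_pow (k + 1) x).div_const _))).congr_deriv ?_
    have hk : (Nat.factorial k : ℝ) ≠ 0 := by positivity
    have hk1 : (k : ℝ) + 1 ≠ 0 := by positivity
    simp only [Nat.factorial_succ, Nat.add_sub_cancel]
    push_cast
    field_simp
    ring

theorem poissonTail_mono (k : ℕ) {x y : ℝ} (hx : 0 ≤ x) (hxy : x ≤ y) :
    poissonTail x k ≤ poissonTail y k := by
  cases k with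
  | zero => simp [poissonTail]
  | succ k =>
    have hm : MonotoneOn (fun z => poissonTail z (k + 1)) (Set.Ici 0) := by
      refine monotoneOn_of_deriv_nonneg (convex_Ici 0)
        (fun z _ => (hasDerivAt_poissonTail k z).continuousAt.continuousWithinAt)
        (fun z _ => (hasDerivAt_poissonTail k z).differentiableAt.differentiableWithinAt) ?_
      intro z hz
      rw [interior_Ici, Set.mem_Ioi] at hz
      rw [(hasDerivAt_poissonTail k z).deriv]
      positivity
    exact hm hx (hx.trans hxy) hxy

theorem utility_sub_mono {x y : ℝ} (hx : 0 ≤ x) (hxy : x ≤ y) {a b : ℕ} (hab : a ≤ b) :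
    utility x b - utility x a ≤ utility y b - utility y a := by
  induction b, hab using Nat.le_induction with
  | base => simp
  | succ b _ ih =>
    have hsucc (z : ℝ) : utility z (b + 1) = utility z b + poissonTail z (b + 1) :=
      Finset.sum_Icc_succ_top (by omega) _
    rw [hsucc x, hsucc y]
    linarith [poissonTail_mono (b + 1) hx hxy]

theorem optimal_pricing_monotone_in_types (T : ℕ) (hT : 1 ≤ T)
    (lam lam' : ℕ → ℝ) (w : ℕ → ℕ)
    (hpos : ∀ t, 1 ≤ t → t ≤ T → 0 < lam t)
    (hmono : ∀ i j, 1 ≤ i → i < j → j ≤ T → lam i < lam j)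
    (hpos' : ∀ t, 1 ≤ t → t ≤ T → 0 < lam' t)
    (hmono' : ∀ i j, 1 ≤ i → i < j → j ≤ T → lam' i < lam' j)
    (hle : ∀ t, 1 ≤ t → t ≤ T → lam t ≤ lam' t)
    (hw : ∀ i j, 1 ≤ i → i ≤ j → j ≤ T → w i ≤ w j)
    (phat phat' : ℕ → ℝ)
    (hphat1 : phat 1 = utility (lam 1) (w 1))
    (hphatk : ∀ k, 2 ≤ k → k ≤ T →
      phat k = phat (k - 1) + utility (lam k) (w k) - utility (lam k) (w (k - 1)))
    (hphat1' : phat' 1 = utility (lam' 1) (w 1))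
    (hphatk' : ∀ k, 2 ≤ k → k ≤ T →
      phat' k = phat' (k - 1) + utility (lam' k) (w k) - utility (lam' k) (w (k - 1))) :
    ∀ t, 1 ≤ t → t ≤ T → phat t ≤ phat' t := by
  intro t ht
  induction t, ht using Nat.le_induction with
  | base =>
    intro h1
    rw [hphat1, hphat1']
    simpa [utility] using
      utility_sub_mono (hpos 1 le_rfl h1).le (hle 1 le_rfl h1) (Nat.zero_le (w 1))
  | succ t ht ih =>
    intro hT'
    have hk := hphatk (t + 1) (by omega) hT'
    have hk' := hphatk' (t + 1) (by omega) hT'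
    rw [Nat.add_sub_cancel] at hk hk'
    linarith [ih (by omega), utility_sub_mono (hpos (t + 1) (by omega) hT').le
      (hle (t + 1) (by omega) hT') (hw t (t + 1) ht (by omega) hT')]
end
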